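/- For every 1 < p < ∞ and every complex-valued f ∈ C_0^∞(ℝⁿ \ {0}), the Sobolev-type inequality ‖f‖_{L^p(ℝⁿ)} ≤ (p/n) ‖E f‖_{L^p(ℝⁿ)} holds, where E f(x) = x·∇f(x). Moreover equality holds if and only if f = 0. -/

import Mathlib

open MeasureTheory Real

/-- The Euler operator `E f (x) = x·∇f(x)`. -/
noncomputable def eulerOp {n : ℕ} (f : EuclideanSpace ℝ (Fin n) → ℂ)
    (x : EuclideanSpace ℝ (Fin n)) : ℂ :=
  fderiv ℝ f x x

theorem euler_integral_by_parts {n : ℕ} (g : EuclideanSpace ℝ (Fin n) → ℝ)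
    (hg : ContDiff ℝ 1 g) (hgc : HasCompactSupport g) :
    ∫ x, fderiv ℝ g x x = - (n * ∫ x, g x) := by
  have hgd : Continuous (fderiv ℝ g) := hg.continuous_fderiv (by norm_num)
  have hgdc : HasCompactSupport (fderiv ℝ g) := hgc.fderiv ℝ
  have key : ∀ i : Fin n, Integrable (fun x : EuclideanSpace ℝ (Fin n) =>
      x i * fderiv ℝ g x (EuclideanSpace.single i 1)) ∧
      ∫ x : EuclideanSpace ℝ (Fin n), x i * fderiv ℝ g x (EuclideanSpace.single i 1)
        = - ∫ x, g x := by
    intro i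
    have hd : ∀ x : EuclideanSpace ℝ (Fin n), HasFDerivAt
        (fun x : EuclideanSpace ℝ (Fin n) => x i)
        (EuclideanSpace.proj i : EuclideanSpace ℝ (Fin n) →L[ℝ] ℝ) x := fun x =>
      (EuclideanSpace.proj i : EuclideanSpace ℝ (Fin n) →L[ℝ] ℝ).hasFDerivAt
    have h1 : Integrable (fun x : EuclideanSpace ℝ (Fin n) =>
      x i * fderiv ℝ g x (EuclideanSpace.single i 1)) := by
      apply Continuous.integrable_of_hasCompactSupport
      · fun_prop
      · apply HasCompactSupport.mul_left
        exact hgdc.comp_left (g := fun L : EuclideanSpace ℝ (Fin n) →L[ℝ] ℝ =>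
          L (EuclideanSpace.single i 1)) (by simp)
    have h2 : Integrable g := hg.continuous.integrable_of_hasCompactSupport hgc
    refine ⟨h1, ?_⟩
    rw [integral_mul_fderiv_eq_neg_fderiv_mul_of_integrable]
    · congr 1
      apply integral_congr_ae
      filter_upwards with x
      rw [(hd x).fderiv]
      simp
    · apply h2.congr
      filter_upwards with x
      rw [(hd x).fderiv]
      simp
    · exact h1
    · apply Continuous.integrable_of_hasCompactSupport
      · have := hg.continuous
        fun_prop
      · exact hgc.mul_left
    · exact fun x _ => (hd x).differentiableAt
    · exact fun x _ => hg.differentiable (by norm_num) x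
  have e : ∀ x : EuclideanSpace ℝ (Fin n), fderiv ℝ g x x =
      ∑ i, x i * fderiv ℝ g x (EuclideanSpace.single i 1) := by
    intro x
    have hx : x = ∑ i, x i • EuclideanSpace.single i (1:ℝ) := by
      ext j
      simp [Finset.sum_apply, Pi.single_apply]
    calc fderiv ℝ g x x
        = fderiv ℝ g x (∑ i, x i • EuclideanSpace.single i (1:ℝ)) := by rw [← hx]
      _ = _ := by rw [map_sum]; simp only [map_smul, smul_eq_mul]
  simp_rw [e]
  rw [integral_finsetSum _ (fun i _ => (key i).1)]
  simp [fun i => (key i).2]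

theorem euler_Lp_sobolev {n : ℕ} (p : ℝ) (hp : 1 < p)
    (f : EuclideanSpace ℝ (Fin n) → ℂ)
    (hf : ContDiff ℝ (⊤ : ℕ∞) f) (hfc : HasCompactSupport f)
    (hf0 : (0 : EuclideanSpace ℝ (Fin n)) ∉ tsupport f) :
    (∫ x, ‖f x‖ ^ p) ^ (1 / p) ≤
      (p / n) * (∫ x, ‖eulerOp f x‖ ^ p) ^ (1 / p) ∧
    ((∫ x, ‖f x‖ ^ p) ^ (1 / p) =
      (p / n) * (∫ x, ‖eulerOp f x‖ ^ p) ^ (1 / p) ↔ f = 0) := by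
  have hp0 : 0 < p := by linarith
  have hf00 : f 0 = 0 := image_eq_zero_of_notMem_tsupport hf0
  have hzero : f = 0 → (∫ x, ‖f x‖ ^ p) ^ (1 / p) =
      (p / n) * (∫ x, ‖eulerOp f x‖ ^ p) ^ (1 / p) := by
    rintro rfl
    have h1 : (1 / p) ≠ 0 := by positivity
    have : eulerOp (0 : EuclideanSpace ℝ (Fin n) → ℂ) = 0 := by
      ext x
      simp [eulerOp]
    rw [this]
    simp [Real.zero_rpow hp0.ne', Real.zero_rpow h1, Real.zero_rpow (inv_ne_zero hp0.ne')]
  rcases Nat.eq_zero_or_pos n with hn | hn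
  · subst hn
    have : f = 0 := by
      ext x
      rw [Subsingleton.elim x 0, hf00]
      rfl
    exact ⟨(hzero this).le, fun _ => this, hzero⟩
  have hn' : (0:ℝ) < n := by exact_mod_cast hn
  set g : EuclideanSpace ℝ (Fin n) → ℝ := fun x => ‖f x‖ ^ p with hgdef
  have hf1 : ContDiff ℝ 1 f := hf.of_le (by exact_mod_cast le_top)
  have hg : ContDiff ℝ 1 g := hf1.norm_rpow hp
  have hgc : HasCompactSupport g :=
    hfc.comp_left (g := fun z : ℂ => ‖z‖ ^ p) (by simp [Real.zero_rpow hp0.ne'])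
  have hfd : Continuous (fderiv ℝ f) := hf1.continuous_fderiv (by norm_num)
  have hEc : Continuous (eulerOp f) := by
    unfold eulerOp
    fun_prop
  have hEs : HasCompactSupport (eulerOp f) := by
    refine (hfc.fderiv ℝ).mono ?_
    intro x hx h
    exact hx (by simp [eulerOp, h])
  have hgd : Continuous (fderiv ℝ g) := hg.continuous_fderiv (by norm_num)
  have hg1 : Continuous (fun x => fderiv ℝ g x x) := by fun_prop
  have hg1s : HasCompactSupport (fun x => fderiv ℝ g x x) := by
    refine (hgc.fderiv ℝ).mono ?_
    intro x hx h
    exact hx (by simp [h])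
  set b : EuclideanSpace ℝ (Fin n) → ℝ := fun x => (p / n * ‖eulerOp f x‖) ^ p with hbdef
  have hbc : Continuous b := by
    apply Continuous.rpow_const (by fun_prop)
    intro x
    right; exact hp0.le
  have hbs : HasCompactSupport b :=
    hEs.comp_left (g := fun z : ℂ => (p / n * ‖z‖) ^ p) (by simp [Real.zero_rpow hp0.ne'])
  have ig : Integrable g := hg.continuous.integrable_of_hasCompactSupport hgc
  have ib : Integrable b := hbc.integrable_of_hasCompactSupport hbs
  have id : Integrable (fun x => fderiv ℝ g x x) := hg1.integrable_of_hasCompactSupport hg1s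
  -- the pointwise inequality
  have hpt : ∀ x, - (fderiv ℝ g x x) / n ≤ (1 - 1/p) * g x + 1/p * b x := by
    intro x
    have hD : fderiv ℝ g x x = p * ‖f x‖ ^ (p - 2) * inner ℝ (f x) (eulerOp f x) := by
      have h1 := (hasFDerivAt_norm_rpow (f x) hp).comp x
        ((hf1.differentiable (by norm_num)) x).hasFDerivAt
      have h2 : HasFDerivAt g _ x := h1
      rw [h2.fderiv]
      simp [eulerOp]
    have hC : - inner ℝ (f x) (eulerOp f x) ≤ ‖f x‖ * ‖eulerOp f x‖ :=
      (neg_le_abs _).trans (abs_real_inner_le_norm _ _)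
    have hpow : ‖f x‖ ^ (p - 2) * ‖f x‖ = ‖f x‖ ^ (p - 1) := by
      rcases eq_or_ne (f x) 0 with h | h
      · simp [h, Real.zero_rpow (show p - 1 ≠ 0 by linarith)]
      · rw [← Real.rpow_add_one (norm_ne_zero_iff.2 h)]
        congr 1; ring
    have hconj : (p / (p - 1)).HolderConjugate p := (Real.HolderConjugate.conjExponent hp).symm
    have hY := Real.young_inequality_of_nonneg (a := ‖f x‖ ^ (p - 1))
      (b := p / n * ‖eulerOp f x‖) (by positivity) (by positivity) hconj
    have hpp : (‖f x‖ ^ (p - 1)) ^ (p / (p - 1)) = g x := by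
      rw [← Real.rpow_mul (norm_nonneg _), mul_div_cancel₀ _ (by linarith : p - 1 ≠ 0)]
    rw [hpp] at hY
    have h3 : - (fderiv ℝ g x x) / n ≤ ‖f x‖ ^ (p - 1) * (p / n * ‖eulerOp f x‖) := by
      rw [hD, ← hpow]
      calc _ = (p / n * ‖f x‖ ^ (p - 2)) * (- inner ℝ (f x) (eulerOp f x)) := by ring
        _ ≤ (p / n * ‖f x‖ ^ (p - 2)) * (‖f x‖ * ‖eulerOp f x‖) := by gcongr
        _ = _ := by ring
    refine h3.trans (hY.trans_eq ?_)
    simp only [hbdef]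
    have : p - 1 ≠ 0 := by linarith
    field_simp
  set h : EuclideanSpace ℝ (Fin n) → ℝ :=
    fun x => (1 - 1/p) * g x + 1/p * b x + (fderiv ℝ g x x) / n with hh
  have hh0 : ∀ x, 0 ≤ h x := by
    intro x
    have := hpt x
    simp only [hh]
    rw [neg_div] at this
    linarith
  have hhint : ∫ x, h x = 1/p * ((∫ x, b x) - ∫ x, g x) := by
    have iab : Integrable (fun x => (1 - 1/p) * g x + 1/p * b x) :=
      (ig.const_mul _).add (ib.const_mul _)
    simp only [hh]
    rw [integral_add iab (id.div_const _),
      integral_add (ig.const_mul _) (ib.const_mul _), integral_const_mul, integral_const_mul,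
      integral_div, euler_integral_by_parts g hg hgc]
    field_simp
    ring
  have hle : ∫ x, g x ≤ ∫ x, b x := by
    have h1 : 0 ≤ ∫ x, h x := integral_nonneg hh0
    rw [hhint] at h1
    have h2 := nonneg_of_mul_nonneg_right h1 (by positivity : 0 < 1 / p)
    linarith
  have hg0 : 0 ≤ ∫ x, g x := integral_nonneg fun x => by positivity
  have hb0 : 0 ≤ ∫ x, b x := integral_nonneg fun x => by positivity
  have hB : (p / n) * (∫ x, ‖eulerOp f x‖ ^ p) ^ (1 / p) = (∫ x, b x) ^ (1 / p) := by
    have : ∫ x, b x = (p / n) ^ p * ∫ x, ‖eulerOp f x‖ ^ p := by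
      rw [← integral_const_mul]
      congr 1
      ext x
      exact Real.mul_rpow (by positivity) (by positivity)
    rw [this, Real.mul_rpow (by positivity) (integral_nonneg fun x => by positivity),
      ← Real.rpow_mul (by positivity), mul_one_div_cancel hp0.ne', Real.rpow_one]
  rw [hB]
  refine ⟨Real.rpow_le_rpow hg0 hle (by positivity), ?_, fun h => by rw [← hB]; exact hzero h⟩
  intro heq
  have heq' : ∫ x, g x = ∫ x, b x :=
    (Real.rpow_left_inj hg0 hb0 (by positivity)).1 heq
  have hhc : Continuous h := by
    have := hg.continuous
    fun_prop
  have hhi : Integrable h := ((ig.const_mul _).add (ib.const_mul _)).add (id.div_const _)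
  have hz : h = 0 := by
    have h1 : ∫ x, h x = 0 := by rw [hhint, heq']; simp
    have h2 := (integral_eq_zero_iff_of_nonneg hh0 hhi).1 h1
    exact (hhc.ae_eq_iff_eq volume continuous_zero).1 h2
  have hneg : ∀ x, fderiv ℝ g x x ≤ 0 := by
    intro x
    have h1 : h x = 0 := by rw [hz]; rfl
    simp only [hh] at h1
    have h2 : 0 ≤ (1 - 1/p) * g x := by
      have : 1 / p ≤ 1 := by rw [div_le_one hp0]; exact hp.le
      have : 0 ≤ g x := by positivity
      apply mul_nonneg <;> linarith
    have h3 : 0 ≤ 1/p * b x := by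
      have : 0 ≤ b x := by positivity
      positivity
    have h4 : fderiv ℝ g x x / n ≤ 0 := by linarith
    by_contra hc
    push Not at hc
    have := div_pos hc hn'
    linarith
  ext x
  have hd : ∀ t : ℝ, HasDerivAt (fun t : ℝ => g (t • x)) (fderiv ℝ g (t • x) x) t := by
    intro t
    have h1 := ((hg.differentiable (by norm_num)) (t • x)).hasFDerivAt
    have h2 : HasDerivAt (fun t : ℝ => t • x) x t := by
      simpa using (hasDerivAt_id t).smul_const x
    exact h1.comp_hasDerivAt t h2
  have hanti : AntitoneOn (fun t : ℝ => g (t • x)) (Set.Icc 0 1) := by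
    apply antitoneOn_of_deriv_nonpos (convex_Icc 0 1)
    · exact fun t _ => (hd t).continuousAt.continuousWithinAt
    · exact fun t _ => (hd t).differentiableAt.differentiableWithinAt
    · intro t ht
      rw [interior_Icc] at ht
      rw [(hd t).deriv]
      have h1 := hneg (t • x)
      rw [map_smul, smul_eq_mul] at h1
      by_contra hc
      push Not at hc
      have := mul_pos ht.1 hc
      linarith
  have h1 := hanti (by simp) (by simp) zero_le_one
  simp only [one_smul, zero_smul, hgdef, hf00, norm_zero, Real.zero_rpow hp0.ne'] at h1
  have h2 : ‖f x‖ ^ p = 0 := le_antisymm h1 (by positivity)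
  rw [Real.rpow_eq_zero (norm_nonneg _) hp0.ne'] at h2
  simpa using h2
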